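/- Let K be a field and σ, τ ring automorphisms of K with σ² = id, τ² = id, σ∘τ = τ∘σ, σ ≠ id, τ ≠ id and τ ≠ σ. Let γ, θ ∈ K with γ ≠ 0, σ(γ) = γ, τ(γ) = γ, σ(θ) = θ and τ(θ) = θ. Then for all c, d, e, f ∈ K, the 4×4 matrix α_θ(M(c,d), M(e,f)) commutes with every element of A if and only if σ(c) = c, τ(c) = c, d = 0, e = 0 and f = 0. (Equivalently, the set of elements of A commuting with all of A is exactly α_θ(F^⟨τ⟩, 0), where F = K^⟨σ⟩.) -/

import Mathlib

open Matrix

noncomputable section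

/-- The left-regular representation `M(c,d) = [[c, γ·σ(d)], [d, σ(c)]]` of the element
`c + jd` of the quaternion algebra `(K/F, σ, γ)`. -/
def qMat {K : Type} [Field K] (σ : RingAut K) (γ : K) (c d : K) : Matrix (Fin 2) (Fin 2) K :=
  !![c, γ * σ d; d, σ c]

/-- The iterated construction `α_θ(X, Y) = [[X, θ·τ(Y)], [Y, τ(X)]]` for `2 × 2` blocks. -/
def alphaTheta {K : Type} [Field K] (θ : K) (τ : RingAut K)
    (X Y : Matrix (Fin 2) (Fin 2) K) :
    Matrix (Fin 2 ⊕ Fin 2) (Fin 2 ⊕ Fin 2) K :=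
  Matrix.fromBlocks X (θ • Y.map ⇑τ) Y (X.map ⇑τ)

/-- The iterated code `A = {α_θ(M(c,d), M(e,f)) : c, d, e, f ∈ K}` (case `τ = σ`). -/
def iterQuatCode {K : Type} [Field K] (σ τ : RingAut K) (γ θ : K) :
    Set (Matrix (Fin 2 ⊕ Fin 2) (Fin 2 ⊕ Fin 2) K) :=
  {W | ∃ c d e f : K, W = alphaTheta θ τ (qMat σ γ c d) (qMat σ γ e f)}

/-!
Commuting with the diagonal elements `α_θ(M(k,0), 0)` gives `dk = σ(k)d`, `ek = τ(k)e` and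
`fk = τ(σ(k))f` for all `k`. Since `K` is commutative, a nonzero `a` with `ak = φ(k)a` for all `k`
forces `φ = 1`, so `d`, `e` and `f` vanish. Commuting with `α_θ(M(0,1), 0)` and `α_θ(0, 1)` then
gives `σ(c) = c` and `τ(c) = c`, so that the element is the scalar matrix `c`.
-/

theorem eq_zero_of_forall_semiconjBy {R : Type*} [CommMagma R] [Zero R] [IsRightCancelMulZero R]
    {φ : R → R} (hφ : φ ≠ id) {a : R} (h : ∀ x, SemiconjBy a x (φ x)) : a = 0 := by
  by_contra ha
  exact hφ (funext fun x => mul_right_cancel₀ ha ((h x).eq.symm.trans (mul_comm a x)))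

section QuaternionMatrix

variable {K : Type} [Field K] {σ φ : RingAut K} {γ c d k : K}

@[simp]
theorem qMat_zero_zero : qMat σ γ 0 0 = 0 := by
  ext i j
  fin_cases i <;> fin_cases j <;> simp [qMat]

theorem qMat_zero_right_eq_smul_one (hc : σ c = c) : qMat σ γ c 0 = c • 1 := by
  ext i j
  fin_cases i <;> fin_cases j <;> simp [qMat, hc]

theorem semiconjBy_of_semiconjBy_qMat_map
    (h : SemiconjBy (qMat σ γ c d) (qMat σ γ k 0) ((qMat σ γ k 0).map φ)) :
    SemiconjBy c k (φ k) ∧ SemiconjBy d k ((φ * σ) k) := by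
  have h₀₀ := congrFun₂ h.eq 0 0
  have h₁₀ := congrFun₂ h.eq 1 0
  simp only [qMat, mul_apply, Fin.sum_univ_two, map_apply, of_apply, cons_val', cons_val_zero,
    cons_val_one, cons_val_fin_one, map_zero, mul_zero, zero_mul, add_zero, zero_add] at h₀₀ h₁₀
  exact ⟨h₀₀, h₁₀⟩

theorem eq_zero_of_forall_semiconjBy_qMat_map (hφ : φ ≠ 1) (hφσ : φ * σ ≠ 1)
    (h : ∀ k, SemiconjBy (qMat σ γ c d) (qMat σ γ k 0) ((qMat σ γ k 0).map φ)) :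
    c = 0 ∧ d = 0 :=
  have hsemi k := semiconjBy_of_semiconjBy_qMat_map (h k)
  ⟨eq_zero_of_forall_semiconjBy (DFunLike.coe_injective.ne hφ) fun k => (hsemi k).1,
    eq_zero_of_forall_semiconjBy (DFunLike.coe_injective.ne hφσ) fun k => (hsemi k).2⟩

theorem eq_zero_of_forall_commute_qMat_zero_right (hσ : σ ≠ 1)
    (h : ∀ k, Commute (qMat σ γ c d) (qMat σ γ k 0)) : d = 0 :=
  eq_zero_of_forall_semiconjBy (DFunLike.coe_injective.ne hσ) fun k =>
    (semiconjBy_of_semiconjBy_qMat_map (φ := 1) (h k)).2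

theorem apply_eq_self_of_commute_qMat_zero_one (h : Commute (qMat σ γ c d) (qMat σ γ 0 1)) :
    σ c = c := by
  simpa [qMat, mul_apply, Fin.sum_univ_two] using congrFun₂ h.eq 1 0

end QuaternionMatrix

section IteratedConstruction

variable {K : Type} [Field K] {τ : RingAut K} {θ : K} {X Y Z W : Matrix (Fin 2) (Fin 2) K}

theorem alphaTheta_mul_alphaTheta :
    alphaTheta θ τ X Y * alphaTheta θ τ Z W =
      fromBlocks (X * Z + θ • (Y.map τ * W)) (θ • (X * W.map τ + Y.map τ * Z.map τ))
        (Y * Z + X.map τ * W) (θ • (Y * W.map τ) + X.map τ * Z.map τ) := by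
  simp only [alphaTheta, fromBlocks_multiply, Matrix.smul_mul, Matrix.mul_smul, smul_add]

theorem commute_and_semiconjBy_of_commute_alphaTheta_zero_right
    (h : Commute (alphaTheta θ τ X Y) (alphaTheta θ τ Z 0)) :
    Commute X Z ∧ SemiconjBy Y Z (Z.map τ) := by
  have hblocks := h.eq
  rw [alphaTheta_mul_alphaTheta, alphaTheta_mul_alphaTheta, fromBlocks_inj] at hblocks
  obtain ⟨h₁₁, -, h₂₁, -⟩ := hblocks
  have hXZ : X * Z = Z * X := by simpa using h₁₁
  have hYZ : Y * Z = Z.map τ * Y := by simpa using h₂₁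
  exact ⟨hXZ, hYZ⟩

theorem map_eq_self_of_commute_alphaTheta_zero_one
    (h : Commute (alphaTheta θ τ X Y) (alphaTheta θ τ 0 1)) : X.map τ = X := by
  have hblocks := h.eq
  rw [alphaTheta_mul_alphaTheta, alphaTheta_mul_alphaTheta, fromBlocks_inj] at hblocks
  simpa using hblocks.2.2.1

theorem alphaTheta_smul_one_zero {c : K} (hc : τ c = c) :
    alphaTheta θ τ (c • 1) 0 = c • 1 := by
  have hmap : (c • (1 : Matrix (Fin 2) (Fin 2) K)).map τ = c • 1 := by
    rw [smul_one_eq_diagonal, diagonal_map (map_zero τ), hc]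
  simp [alphaTheta, hmap, ← fromBlocks_one, fromBlocks_smul]

end IteratedConstruction

theorem stmt5_general {K : Type} [Field K] {σ τ : RingAut K} (hσ : σ ≠ 1) (hτ : τ ≠ 1)
    (hτσ : τ * σ ≠ 1) (γ θ c d e f : K) :
    (∀ W ∈ iterQuatCode σ τ γ θ,
        alphaTheta θ τ (qMat σ γ c d) (qMat σ γ e f) * W =
          W * alphaTheta θ τ (qMat σ γ c d) (qMat σ γ e f)) ↔
      (σ c = c ∧ τ c = c ∧ d = 0 ∧ e = 0 ∧ f = 0) := by
  constructor
  · intro h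
    have hdiag k l := commute_and_semiconjBy_of_commute_alphaTheta_zero_right
      (h (alphaTheta θ τ (qMat σ γ k l) 0) ⟨k, l, 0, 0, by rw [qMat_zero_zero]⟩)
    have hmap := map_eq_self_of_commute_alphaTheta_zero_one
      (h (alphaTheta θ τ 0 1) ⟨0, 0, 1, 0, by simp [qMat_zero_right_eq_smul_one]⟩)
    have hd : d = 0 := eq_zero_of_forall_commute_qMat_zero_right hσ fun k => (hdiag k 0).1
    obtain ⟨he, hf⟩ := eq_zero_of_forall_semiconjBy_qMat_map hτ hτσ fun k => (hdiag k 0).2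
    exact ⟨apply_eq_self_of_commute_qMat_zero_one (hdiag 0 1).1, congrFun₂ hmap 0 0, hd, he, hf⟩
  · rintro ⟨hσc, hτc, rfl, rfl, rfl⟩ W -
    rw [qMat_zero_right_eq_smul_one hσc, qMat_zero_zero, alphaTheta_smul_one_zero hτc]
    exact (Commute.one_left W).smul_left c

/-- with `σ, τ` distinct commuting order-two automorphisms (`τ ∉ ⟨σ⟩`)
fixing `γ ≠ 0` and `θ`, the element `α_θ(M(c,d), M(e,f))` commutes with every element
of `A` iff `σ(c) = c`, `τ(c) = c`, `d = 0`, `e = 0` and `f = 0`; i.e. the commutant of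
`A` in `A` is exactly `α_θ(F^⟨τ⟩, 0)` where `F = K^⟨σ⟩`. -/
theorem stmt5 {K : Type} [Field K] (σ τ : RingAut K)
    (hσ2 : σ * σ = 1) (hτ2 : τ * τ = 1) (hcomm : σ * τ = τ * σ)
    (hσ : σ ≠ 1) (hτ : τ ≠ 1) (hτσ : τ ≠ σ)
    (γ θ : K) (hγ : γ ≠ 0) (hσγ : σ γ = γ) (hτγ : τ γ = γ) (hσθ : σ θ = θ) (hτθ : τ θ = θ) :
    ∀ c d e f : K,
      (∀ W ∈ iterQuatCode σ τ γ θ,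
          alphaTheta θ τ (qMat σ γ c d) (qMat σ γ e f) * W =
            W * alphaTheta θ τ (qMat σ γ c d) (qMat σ γ e f)) ↔
        (σ c = c ∧ τ c = c ∧ d = 0 ∧ e = 0 ∧ f = 0) := by
  have hτσ' : τ * σ ≠ 1 := fun h => hτσ (mul_right_cancel (h.trans hσ2.symm))
  exact stmt5_general hσ hτ hτσ' γ θ
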